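/- For μ_p-almost every x ∈ pℤ_p and every real t > 0, the limit of (a_1(x)^{−t} + ⋯ + a_n(x)^{−t})/n as n → ∞ exists and equals (p−1) ∑_{k≥1} k^{−t} p^{−k}, which is finite. -/

import Mathlib

open scoped Classical

/-- The first digit `b_1(x)` of Schneider's continued fraction. -/
noncomputable def schneiderB1 (p : ℕ) [Fact p.Prime] (x : ℚ_[p]) : ℕ :=
  if h : ∃ b : ℕ, 1 ≤ b ∧ b ≤ p - 1 ∧ ‖(p : ℚ_[p]) ^ x.valuation / x - (b : ℚ_[p])‖ < 1 then
    h.choose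
  else 0

/-- Schneider's continued fraction map `T_p`. -/
noncomputable def schneiderT (p : ℕ) [Fact p.Prime] (x : ℚ_[p]) : ℚ_[p] :=
  if x = 0 then 0 else (p : ℚ_[p]) ^ x.valuation / x - (schneiderB1 p x : ℚ_[p])


section aux
open MeasureTheory ProbabilityTheory Metric Set

variable {p : ℕ} [hp : Fact p.Prime]

lemma aux_val {x : ℚ_[p]} {k : ℤ} (h : ‖x‖ = (p : ℝ) ^ (-k)) : x ≠ 0 ∧ x.valuation = k := by
  have hp1 : (1 : ℝ) < p := by exact_mod_cast hp.out.one_lt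
  have h0 : x ≠ 0 := by
    intro h0
    rw [h0, norm_zero] at h
    have : (0 : ℝ) < (p : ℝ) ^ (-k) := by positivity
    linarith
  refine ⟨h0, ?_⟩
  rw [Padic.norm_eq_zpow_neg_valuation h0] at h
  have := zpow_right_injective₀ (by linarith) hp1.ne' h
  simpa using this

lemma aux_norm_nat {b : ℕ} (h1 : 1 ≤ b) (h2 : b ≤ p - 1) : ‖(b : ℚ_[p])‖ = 1 := by
  rw [Padic.norm_natCast_eq_one_iff]
  have := hp.out.two_le
  exact (Nat.coprime_of_lt_prime (by omega) (by omega) hp.out)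

lemma aux_uniq {b c : ℕ} (hb : b < p) (hc : c < p) (h : ‖(b : ℚ_[p]) - c‖ < 1) : b = c := by
  have h' : ‖(((b : ℤ) - (c : ℤ) : ℤ) : ℚ_[p])‖ < 1 := by push_cast; exact h
  rw [Padic.norm_intCast_lt_one_iff] at h'
  have := Int.emod_emod_of_dvd
  obtain ⟨d, hd⟩ := h'
  have hd0 : d = 0 := by
    by_contra hne
    have : (p : ℤ) ≤ |(p : ℤ) * d| := by
      rw [abs_mul]
      have : 1 ≤ |d| := Int.one_le_abs hne
      have h3 : |(p : ℤ)| = p := abs_of_nonneg (by positivity)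
      rw [h3]; nlinarith
    rw [← hd] at this
    have : |(b : ℤ) - c| < p := by rw [abs_lt]; constructor <;> omega
    omega
  subst hd0
  omega

lemma aux_exists {x : ℚ_[p]} (hx : x ≠ 0) :
    ∃ b : ℕ, 1 ≤ b ∧ b ≤ p - 1 ∧ ‖(p : ℚ_[p]) ^ x.valuation / x - (b : ℚ_[p])‖ < 1 := by
  have hp0 : (p : ℝ) ≠ 0 := by exact_mod_cast hp.out.ne_zero
  have hn : ‖(p : ℚ_[p]) ^ x.valuation / x‖ = 1 := by
    rw [norm_div, Padic.norm_p_zpow, Padic.norm_eq_zpow_neg_valuation hx]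
    exact div_self (zpow_ne_zero _ hp0)
  obtain ⟨n, hn1, hn2⟩ := PadicInt.exists_mem_range (p := p) ⟨_, hn.le⟩
  rw [IsLocalRing.mem_maximalIdeal, PadicInt.mem_nonunits] at hn2
  have hn3 : ‖(p : ℚ_[p]) ^ x.valuation / x - (n : ℚ_[p])‖ < 1 := by
    rw [PadicInt.norm_def] at hn2
    exact hn2
  refine ⟨n, ?_, by omega, hn3⟩
  rcases Nat.eq_zero_or_pos n with h0 | h0
  · subst h0
    simp only [Nat.cast_zero, sub_zero] at hn3
    linarith
  · exact h0

lemma aux_B1_spec {x : ℚ_[p]} (hx : x ≠ 0) :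
    1 ≤ schneiderB1 p x ∧ schneiderB1 p x ≤ p - 1 ∧
      ‖(p : ℚ_[p]) ^ x.valuation / x - (schneiderB1 p x : ℚ_[p])‖ < 1 := by
  have h := aux_exists hx
  unfold schneiderB1
  rw [dif_pos h]
  exact h.choose_spec

lemma aux_B1_eq {x : ℚ_[p]} (hx : x ≠ 0) {b : ℕ} (h2 : b ≤ p - 1)
    (h : ‖(p : ℚ_[p]) ^ x.valuation / x - (b : ℚ_[p])‖ < 1) : schneiderB1 p x = b := by
  obtain ⟨s1, s2, s3⟩ := aux_B1_spec hx
  have := hp.out.two_le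
  apply aux_uniq (p := p) (by omega) (by omega)
  have e : (schneiderB1 p x : ℚ_[p]) - b = ((p : ℚ_[p]) ^ x.valuation / x - (b : ℚ_[p]))
    - ((p : ℚ_[p]) ^ x.valuation / x - (schneiderB1 p x : ℚ_[p])) := by ring
  rw [e]
  rw [sub_eq_add_neg _ ((p : ℚ_[p]) ^ x.valuation / x - (schneiderB1 p x : ℚ_[p]))]
  refine lt_of_le_of_lt (IsUltrametricDist.norm_add_le_max _ _) (max_lt h ?_)
  rwa [norm_neg]

lemma aux_T_norm (x : ℚ_[p]) : ‖schneiderT p x‖ < 1 := by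
  unfold schneiderT
  split_ifs with h
  · simp
  · exact (aux_B1_spec h).2.2

/-- cylinder set -/
def cyl (p : ℕ) [Fact p.Prime] (k : ℤ) (b : ℕ) : Set ℚ_[p] :=
  {x | x ≠ 0 ∧ x.valuation = k ∧ schneiderB1 p x = b}

lemma aux_norm_add {b : ℕ} (h1 : 1 ≤ b) (h2 : b ≤ p - 1) {c : ℚ_[p]} (hc : ‖c‖ < 1) :
    ‖(b : ℚ_[p]) + c‖ = 1 := by
  have hb := aux_norm_nat (p := p) h1 h2
  rw [IsUltrametricDist.norm_add_eq_max_of_norm_ne_norm (by rw [hb]; exact hc.ne'), hb]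
  exact max_eq_left hc.le

lemma aux_diff {x c : ℚ_[p]} {b : ℕ} {k : ℤ} (h1 : 1 ≤ b) (h2 : b ≤ p - 1) (hc : ‖c‖ < 1)
    (hx : ‖x‖ = (p : ℝ) ^ (-k)) :
    ‖x - (p : ℚ_[p]) ^ k / (b + c)‖ = (p : ℝ) ^ (-k) * ‖(p : ℚ_[p]) ^ k / x - b - c‖ := by
  have hbc := aux_norm_add (p := p) h1 h2 hc
  have hbc0 : (b : ℚ_[p]) + c ≠ 0 := by
    intro h; rw [h] at hbc; simp at hbc
  obtain ⟨hx0, -⟩ := aux_val hx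
  have e : x - (p : ℚ_[p]) ^ k / (b + c) = - (x * ((p : ℚ_[p]) ^ k / x - b - c) / (b + c)) := by
    field_simp
    ring
  rw [e, norm_neg, norm_div, hbc, norm_mul, hx, div_one]

lemma aux_cyl {c : ℚ_[p]} {b : ℕ} {k : ℤ} {r : ℝ} (h1 : 1 ≤ b) (h2 : b ≤ p - 1) (hc : ‖c‖ < 1)
    (hr : r ≤ 1) :
    cyl p k b ∩ schneiderT p ⁻¹' ball c r = ball ((p : ℚ_[p]) ^ k / (b + c)) ((p : ℝ) ^ (-k) * r) := by
  have hp0 : (0 : ℝ) < p := by exact_mod_cast hp.out.pos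
  have hk : (0 : ℝ) < (p : ℝ) ^ (-k) := by positivity
  ext x
  simp only [cyl, mem_inter_iff, mem_ofPred_eq, mem_preimage, mem_ball, dist_eq_norm]
  constructor
  · rintro ⟨⟨h0, hv, hb⟩, hT⟩
    unfold schneiderT at hT
    rw [if_neg h0, hv, hb] at hT
    have hx : ‖x‖ = (p : ℝ) ^ (-k) := by rw [Padic.norm_eq_zpow_neg_valuation h0, hv]
    rw [aux_diff h1 h2 hc hx]
    exact mul_lt_mul_of_pos_left hT hk
  · intro h
    have hbc := aux_norm_add (p := p) h1 h2 hc
    have hφ : ‖(p : ℚ_[p]) ^ k / (b + c)‖ = (p : ℝ) ^ (-k) := by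
      rw [norm_div, hbc, Padic.norm_p_zpow, div_one]
    have hlt : ‖x - (p : ℚ_[p]) ^ k / (b + c)‖ < (p : ℝ) ^ (-k) :=
      lt_of_lt_of_le h (by nlinarith)
    have hx : ‖x‖ = (p : ℝ) ^ (-k) := by
      have e : x = (p : ℚ_[p]) ^ k / (b + c) + (x - (p : ℚ_[p]) ^ k / (b + c)) := by ring
      rw [e, IsUltrametricDist.norm_add_eq_max_of_norm_ne_norm (by rw [hφ]; exact hlt.ne'), hφ]
      exact max_eq_left hlt.le
    obtain ⟨h0, hv⟩ := aux_val hx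
    rw [aux_diff h1 h2 hc hx] at h
    have h' := lt_of_mul_lt_mul_left h hk.le
    have hb : schneiderB1 p x = b := by
      apply aux_B1_eq h0 h2
      rw [hv]
      have e : (p : ℚ_[p]) ^ k / x - b = ((p : ℚ_[p]) ^ k / x - b - c) + c := by ring
      rw [e]
      exact lt_of_le_of_lt (IsUltrametricDist.norm_add_le_max _ _) (max_lt (by linarith) hc)
    refine ⟨⟨h0, hv, hb⟩, ?_⟩
    unfold schneiderT
    rwa [if_neg h0, hv, hb]

lemma aux_cyl_univ {b : ℕ} {k : ℤ} (h1 : 1 ≤ b) (h2 : b ≤ p - 1) :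
    cyl p k b = ball ((p : ℚ_[p]) ^ k / (b + 0)) ((p : ℝ) ^ (-k) * 1) := by
  rw [← aux_cyl h1 h2 (by simp) le_rfl]
  ext x
  simp [aux_T_norm]

variable [MeasurableSpace ℚ_[p]] [BorelSpace ℚ_[p]]

lemma aux_meas_val : Measurable (fun x : ℚ_[p] => x.valuation) := by
  apply measurable_to_countable'
  intro k
  have : (fun x : ℚ_[p] => x.valuation) ⁻¹' {k} =
      {x | ‖x‖ = (p : ℝ) ^ (-k)} ∪ {x | x = 0 ∧ k = 0} := by
    ext x
    simp only [mem_preimage, mem_singleton_iff, mem_union, mem_ofPred_eq]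
    by_cases h0 : x = 0
    · subst h0
      have hp0 : (0 : ℝ) < p := by exact_mod_cast hp.out.pos
      have hk : (0 : ℝ) < (p : ℝ) ^ (-k) := by positivity
      simp [hk.ne, eq_comm, -zpow_neg]
    · constructor
      · intro h; left; rw [Padic.norm_eq_zpow_neg_valuation h0, h]
      · rintro (h | h)
        · exact (aux_val h).2
        · exact absurd h.1 h0
  rw [this]
  apply MeasurableSet.union
  · exact measurableSet_eq_fun measurable_norm measurable_const
  · by_cases hk : k = 0
    · simp [hk]
    · simp [hk]

lemma aux_meas_pre : Measurable (fun x : ℚ_[p] => (p : ℚ_[p]) ^ x.valuation / x) :=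
  ((measurable_from_top (f := fun k : ℤ => (p : ℚ_[p]) ^ k)).comp aux_meas_val).div measurable_id

lemma aux_meas_B1 : Measurable (fun x : ℚ_[p] => schneiderB1 p x) := by
  have : Measurable (fun x : ℚ_[p] => if x = 0 then schneiderB1 p 0 else schneiderB1 p x) := by
    apply measurable_to_countable'
    intro b
    have : (fun x : ℚ_[p] => if x = 0 then schneiderB1 p 0 else schneiderB1 p x) ⁻¹' {b} =
      {x | x = 0 ∧ schneiderB1 p 0 = b} ∪
      ({0}ᶜ ∩ {x | ‖(p : ℚ_[p]) ^ x.valuation / x - (b : ℚ_[p])‖ < 1 ∧ b ≤ p - 1}) := by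
      ext x
      by_cases h0 : x = 0
      · simp [h0]
      · simp only [mem_preimage, h0, if_false, mem_singleton_iff, mem_union, mem_ofPred_eq,
          false_and, false_or, mem_inter_iff, mem_compl_iff, not_false_eq_true, true_and]
        constructor
        · rintro rfl
          exact ⟨(aux_B1_spec h0).2.2, (aux_B1_spec h0).2.1⟩
        · rintro ⟨h, h'⟩
          exact aux_B1_eq h0 h' h
    rw [this]
    apply MeasurableSet.union
    · by_cases hk : schneiderB1 p 0 = b
      · simp [hk]
      · simp [hk]
    · refine (measurableSet_singleton _).compl.inter ?_
      by_cases hb : b ≤ p - 1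
      · simp only [hb, and_true]
        exact measurableSet_lt (aux_meas_pre.sub measurable_const).norm measurable_const
      · simp [hb]
  convert this using 2 with x
  split_ifs with h <;> simp [h]

lemma aux_meas_T : Measurable (schneiderT p) := by
  unfold schneiderT
  refine Measurable.ite (measurableSet_singleton _) measurable_const ?_
  exact aux_meas_pre.sub
    ((measurable_from_top (f := fun k : ℕ => (k : ℚ_[p]))).comp aux_meas_B1)


/-- the unit p -/
noncomputable def pU (p : ℕ) [hp : Fact p.Prime] : ℚ_[p]ˣ :=
  Units.mk0 (p : ℚ_[p]) (by exact_mod_cast hp.out.ne_zero)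

/-- scaling factor -/
noncomputable def dl (p : ℕ) [hp : Fact p.Prime] : NNReal := distribHaarChar ℚ_[p] (pU p)

variable (μ : Measure ℚ_[p]) [μ.IsAddHaarMeasure]

lemma aux_ball_center (c : ℚ_[p]) (r : ℝ) : μ (ball c r) = μ (ball 0 r) := by
  have : (fun y => (-c) + y) ⁻¹' (ball 0 r) = ball c r := by
    ext y; simp [dist_eq_norm, sub_eq_add_neg, add_comm]
  rw [← this, measure_preimage_add]

lemma aux_ball_scale (c c' : ℚ_[p]) (k : ℕ) (r : ℝ) :
    μ (ball c ((p : ℝ) ^ (-(k : ℤ)) * r)) = (dl p : ENNReal) ^ k * μ (ball c' r) := by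
  have hp0 : (0 : ℝ) < p := by exact_mod_cast hp.out.pos
  rw [aux_ball_center μ c, aux_ball_center μ c']
  have h := distribHaarChar_mul μ (pU p ^ k) (ball (0 : ℚ_[p]) r)
  rw [map_pow, ENNReal.coe_pow] at h
  unfold dl
  rw [h]
  congr 1
  ext x
  have hk : (0 : ℝ) < (p : ℝ) ^ (-(k : ℤ)) := by positivity
  rw [mem_smul_set_iff_inv_smul_mem]
  simp only [mem_ball, dist_zero_right, Units.smul_def, smul_eq_mul]
  have : ‖(((pU p ^ k)⁻¹ : ℚ_[p]ˣ) : ℚ_[p]) * x‖ = ((p : ℝ) ^ (-(k : ℤ)))⁻¹ * ‖x‖ := by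
    rw [norm_mul]
    congr 1
    simp [pU]
  rw [this, inv_mul_lt_iff₀ hk]

lemma aux_ball_fin (r : ℝ) : μ (ball (0 : ℚ_[p]) r) ≠ ⊤ := measure_ball_lt_top.ne

/-- balls -/
def ballSys (p : ℕ) [Fact p.Prime] : Set (Set ℚ_[p]) := {s | ∃ c r, s = ball c r}

lemma aux_gen : (inferInstance : MeasurableSpace ℚ_[p]) = MeasurableSpace.generateFrom (ballSys p) := by
  have hb : TopologicalSpace.IsTopologicalBasis (ballSys p) := by
    apply TopologicalSpace.isTopologicalBasis_of_isOpen_of_nhds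
    · rintro u ⟨c, r, rfl⟩; exact isOpen_ball
    · intro a u ha hu
      obtain ⟨e, he, h⟩ := Metric.isOpen_iff.1 hu a ha
      exact ⟨_, ⟨a, e, rfl⟩, mem_ball_self he, h⟩
  rw [← hb.borel_eq_generateFrom]
  exact BorelSpace.measurable_eq

lemma aux_pi : IsPiSystem (ballSys p) := by
  rintro _ ⟨c, r, rfl⟩ _ ⟨d, s, rfl⟩ hne
  rcases IsUltrametricDist.ball_subset_trichotomy c d r s with h | h | h
  · rw [inter_eq_left.2 h]; exact ⟨_, _, rfl⟩
  · rw [inter_eq_right.2 h]; exact ⟨_, _, rfl⟩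
  · rw [h.inter_eq] at hne; exact absurd hne (by simp)

lemma aux_meas_cyl {b : ℕ} {k : ℤ} (h1 : 1 ≤ b) (h2 : b ≤ p - 1) : MeasurableSet (cyl p k b) := by
  rw [aux_cyl_univ h1 h2]; exact measurableSet_ball

lemma aux_map {b : ℕ} (k : ℕ) (h1 : 1 ≤ b) (h2 : b ≤ p - 1) :
    (μ.restrict (cyl p k b)).map (schneiderT p) =
      (dl p : ENNReal) ^ k • μ.restrict (ball (0 : ℚ_[p]) 1) := by
  have hm := aux_meas_cyl (p := p) (k := k) h1 h2
  have htot : μ (cyl p k b) = (dl p : ENNReal) ^ k * μ (ball 0 1) := by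
    rw [aux_cyl_univ h1 h2]; exact aux_ball_scale μ _ _ _ _
  have : IsFiniteMeasure (μ.restrict (cyl p k b)) := by
    refine ⟨?_⟩
    rw [Measure.restrict_apply_univ, aux_cyl_univ h1 h2]
    exact measure_ball_lt_top
  have : IsFiniteMeasure ((μ.restrict (cyl p k b)).map (schneiderT p)) :=
    Measure.isFiniteMeasure_map _ _
  refine ext_of_generate_finite (ballSys p) aux_gen aux_pi ?_ ?_
  · rintro _ ⟨c, r, rfl⟩
    rw [Measure.map_apply aux_meas_T measurableSet_ball,
      Measure.restrict_apply (aux_meas_T measurableSet_ball), Measure.smul_apply,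
      Measure.restrict_apply measurableSet_ball, smul_eq_mul, inter_comm]
    rcases IsUltrametricDist.ball_subset_trichotomy c 0 r 1 with h | h | h
    · rw [inter_eq_left.2 h]
      rcases le_or_gt r 0 with hr | hr
      · simp [ball_eq_empty.2 hr]
      have hc : ‖c‖ < 1 := by simpa using h (mem_ball_self hr)
      rcases le_or_gt r 1 with hr1 | hr1
      · rw [aux_cyl h1 h2 hc hr1]
        exact aux_ball_scale μ _ _ _ _
      · have e : ball c r = ball c 1 := by
          apply Subset.antisymm
          · rwa [← IsUltrametricDist.ball_eq_of_mem (x := (0 : ℚ_[p])) (y := c) (r := 1) (by simpa using hc)]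
          · exact ball_subset_ball hr1.le
        rw [e, aux_cyl h1 h2 hc le_rfl]
        exact aux_ball_scale μ _ _ _ _
    · rw [inter_eq_right.2 h, inter_eq_left.2, htot]
      intro x _
      exact h (by simpa using aux_T_norm x)
    · rw [h.inter_eq, measure_empty, mul_zero]
      have : cyl p k b ∩ schneiderT p ⁻¹' ball c r = ∅ := by
        ext x
        simp only [mem_inter_iff, mem_preimage, mem_empty_iff_false, iff_false, not_and]
        intro _ hx
        exact Set.disjoint_left.1 h hx (by simpa using aux_T_norm x)
      rw [this, measure_empty]
  · rw [Measure.map_apply aux_meas_T MeasurableSet.univ, preimage_univ, Measure.restrict_apply_univ,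
      Measure.smul_apply, Measure.restrict_apply_univ, smul_eq_mul, htot]

lemma aux_cyl_T {b : ℕ} (k : ℕ) (h1 : 1 ≤ b) (h2 : b ≤ p - 1) {A : Set ℚ_[p]}
    (hA : MeasurableSet A) :
    μ (cyl p k b ∩ schneiderT p ⁻¹' A) = (dl p : ENNReal) ^ k * μ (A ∩ ball 0 1) := by
  have := congrArg (fun m => m A) (aux_map μ k h1 h2)
  simp only [Measure.map_apply aux_meas_T hA, Measure.smul_apply, smul_eq_mul,
      Measure.restrict_apply (aux_meas_T hA), Measure.restrict_apply hA] at this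
  rw [inter_comm, this]

lemma aux_sph_eq (k : ℤ) : {x : ℚ_[p] | x ≠ 0 ∧ x.valuation = k} =
    ⋃ b ∈ Finset.Icc 1 (p - 1), cyl p k b := by
  ext x
  simp only [mem_ofPred_eq, mem_iUnion, cyl, Finset.mem_Icc, exists_prop]
  constructor
  · rintro ⟨h, h'⟩
    exact ⟨_, ⟨(aux_B1_spec h).1, (aux_B1_spec h).2.1⟩, h, h', rfl⟩
  · rintro ⟨b, _, h, h', _⟩
    exact ⟨h, h'⟩

lemma aux_sph_T (k : ℕ) {A : Set ℚ_[p]} (hA : MeasurableSet A) :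
    μ ({x : ℚ_[p] | x ≠ 0 ∧ x.valuation = k} ∩ schneiderT p ⁻¹' A) =
      ((p - 1 : ℕ) : ENNReal) * (dl p : ENNReal) ^ k * μ (A ∩ ball 0 1) := by
  rw [aux_sph_eq, iUnion₂_inter, measure_biUnion_finset]
  · rw [Finset.sum_congr rfl (g := fun _ => (dl p : ENNReal) ^ k * μ (A ∩ ball 0 1))]
    · simp [mul_assoc]
    · intro b hb
      rw [Finset.mem_Icc] at hb
      exact aux_cyl_T μ k hb.1 hb.2 hA
  · intro b _ b' _ hbb
    refine Set.disjoint_left.2 ?_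
    rintro x ⟨⟨_, _, h⟩, _⟩ ⟨⟨_, _, h'⟩, _⟩
    exact hbb (h.symm.trans h')
  · intro b hb
    simp only [Finset.mem_Icc] at hb
    exact (aux_meas_cyl hb.1 hb.2).inter (aux_meas_T hA)

lemma aux_pos_val {x : ℚ_[p]} (h0 : x ≠ 0) : ‖x‖ < 1 ↔ 1 ≤ x.valuation := by
  have hp1 : (1 : ℝ) < p := by exact_mod_cast hp.out.one_lt
  rw [Padic.norm_eq_zpow_neg_valuation h0, zpow_lt_one_iff_right₀ hp1]
  omega

lemma aux_meas_sph (k : ℤ) : MeasurableSet {x : ℚ_[p] | x ≠ 0 ∧ x.valuation = k} := by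
  apply MeasurableSet.inter
  · exact (measurableSet_singleton _).compl
  · exact aux_meas_val (measurableSet_singleton k)

lemma aux_dl (hμ : μ (ball (0 : ℚ_[p]) 1) = 1) : dl p = (p : NNReal)⁻¹ := by
  have hp1 : (1 : ℝ) < p := by exact_mod_cast hp.out.one_lt
  have e : ball (0 : ℚ_[p]) 1 = ball 0 ((p : ℝ) ^ (-((1 : ℕ) : ℤ)) * 1) ∪
      {x : ℚ_[p] | x ≠ 0 ∧ x.valuation = (1 : ℕ)} := by
    ext x
    simp only [mem_ball, dist_zero_right, mem_union, mem_ofPred_eq, mul_one]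
    by_cases h0 : x = 0
    · simp [h0, hp.out.pos]
    · rw [aux_pos_val h0, Padic.norm_eq_zpow_neg_valuation h0, zpow_lt_zpow_iff_right₀ hp1]
      simp only [h0, ne_eq, not_false_eq_true, true_and]
      omega
  have hd : Disjoint (ball 0 ((p : ℝ) ^ (-((1 : ℕ) : ℤ)) * 1))
      {x : ℚ_[p] | x ≠ 0 ∧ x.valuation = (1 : ℕ)} := by
    refine Set.disjoint_left.2 ?_
    rintro x hx ⟨h0, hv⟩
    simp only [mem_ball, dist_zero_right, mul_one] at hx
    rw [Padic.norm_eq_zpow_neg_valuation h0, hv] at hx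
    exact lt_irrefl _ hx
  have h := congrArg μ e
  rw [measure_union hd (aux_meas_sph _), aux_ball_scale μ 0 0] at h
  have h2 := aux_sph_T μ 1 (A := univ) MeasurableSet.univ
  rw [preimage_univ, inter_univ, univ_inter, hμ] at h2
  rw [h2, hμ] at h
  have hp2 := hp.out.two_le
  have h3 : (1 : NNReal) = dl p + ((p - 1 : ℕ) : NNReal) * dl p := by
    have : ((1 : NNReal) : ENNReal) = ((dl p + ((p - 1 : ℕ) : NNReal) * dl p : NNReal) : ENNReal) := by
      push_cast
      simpa using h
    exact_mod_cast this
  have h4 : (1 : NNReal) = p * dl p := by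
    rw [h3]
    have : (p : NNReal) = ((p - 1 : ℕ) : NNReal) + 1 := by
      rw [← Nat.cast_succ]; congr 1; omega
    rw [this]; ring
  exact eq_inv_of_mul_eq_one_right h4.symm

lemma aux_zero : μ {(0 : ℚ_[p])} = 0 := by
  have : Filter.NeBot (nhdsWithin (0 : ℚ_[p]) {0}ᶜ) := inferInstance
  exact measure_singleton _

lemma aux_k_val (hμ : μ (ball (0 : ℚ_[p]) 1) = 1) (k : ℕ) (hk : 1 ≤ k) {A : Set ℚ_[p]}
    (hA : MeasurableSet A) :
    μ.restrict (ball 0 1) ((fun x : ℚ_[p] => x.valuation) ⁻¹' {(k : ℤ)} ∩ schneiderT p ⁻¹' A) =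
      ((p - 1 : ℕ) : ENNReal) * (dl p : ENNReal) ^ k * μ.restrict (ball 0 1) A := by
  rw [Measure.restrict_apply hA, ← aux_sph_T μ k hA,
    Measure.restrict_apply ((aux_meas_val (measurableSet_singleton _)).inter (aux_meas_T hA))]
  congr 1
  ext x
  simp only [mem_inter_iff, mem_preimage, mem_singleton_iff, mem_ball, dist_zero_right,
    mem_ofPred_eq]
  constructor
  · rintro ⟨⟨h1, h2⟩, h3⟩
    refine ⟨⟨?_, h1⟩, h2⟩
    rintro rfl
    simp at h1
    omega
  · rintro ⟨⟨h1, h2⟩, h3⟩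
    refine ⟨⟨h2, h3⟩, ?_⟩
    rw [aux_pos_val h1]
    omega

lemma aux_k_val0 (k : ℤ) (hk : k < 1) :
    μ.restrict (ball 0 1) ((fun x : ℚ_[p] => x.valuation) ⁻¹' {k}) = 0 := by
  rw [Measure.restrict_apply (aux_meas_val (measurableSet_singleton _))]
  refine measure_mono_null ?_ (aux_zero μ)
  rintro x ⟨h1, h2⟩
  simp only [mem_preimage, mem_singleton_iff, mem_ball, dist_zero_right] at *
  by_contra h0
  rw [aux_pos_val h0] at h2
  omega

lemma aux_indep0 (hμ : μ (ball (0 : ℚ_[p]) 1) = 1) (k : ℤ) {A : Set ℚ_[p]}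
    (hA : MeasurableSet A) :
    μ.restrict (ball 0 1) ((fun x : ℚ_[p] => x.valuation) ⁻¹' {k} ∩ schneiderT p ⁻¹' A) =
      μ.restrict (ball 0 1) ((fun x : ℚ_[p] => x.valuation) ⁻¹' {k}) *
        μ.restrict (ball 0 1) A := by
  rcases lt_or_ge k 1 with hk | hk
  · rw [aux_k_val0 μ k hk, zero_mul]
    exact measure_mono_null inter_subset_left (aux_k_val0 μ k hk)
  · lift k to ℕ using (by omega)
    rw [aux_k_val μ hμ k (by omega) hA]
    have := aux_k_val μ hμ k (by omega) MeasurableSet.univ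
    rw [preimage_univ, inter_univ, Measure.restrict_apply_univ, hμ, mul_one] at this
    rw [this]

lemma aux_prob (hμ : μ (ball (0 : ℚ_[p]) 1) = 1) :
    IsProbabilityMeasure (μ.restrict (ball (0 : ℚ_[p]) 1)) :=
  ⟨by rw [Measure.restrict_apply_univ, hμ]⟩

lemma aux_mp (hμ : μ (ball (0 : ℚ_[p]) 1) = 1) :
    MeasurePreserving (schneiderT p) (μ.restrict (ball 0 1)) (μ.restrict (ball 0 1)) := by
  have hP := aux_prob μ hμ
  refine ⟨aux_meas_T, ?_⟩
  ext A hA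
  rw [Measure.map_apply aux_meas_T hA]
  have hpart : ∀ S : Set ℚ_[p], MeasurableSet S → μ.restrict (ball 0 1) S =
      ∑' k : ℤ, μ.restrict (ball 0 1) ((fun x : ℚ_[p] => x.valuation) ⁻¹' {k} ∩ S) := by
    intro S hS
    rw [← measure_iUnion]
    · congr 1
      ext x; simp
    · intro i j hij
      refine Set.disjoint_left.2 ?_
      rintro x ⟨h, _⟩ ⟨h', _⟩
      exact hij (h.symm.trans h')
    · intro k
      exact (aux_meas_val (measurableSet_singleton _)).inter hS
  rw [hpart _ (aux_meas_T hA)]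
  simp_rw [aux_indep0 μ hμ _ hA]
  rw [ENNReal.tsum_mul_right]
  have := hpart univ MeasurableSet.univ
  simp only [inter_univ] at this
  rw [← this, measure_univ, one_mul]

/-- digits -/
noncomputable def dg (p : ℕ) [Fact p.Prime] (i : ℕ) (x : ℚ_[p]) : ℤ :=
  ((schneiderT p)^[i] x).valuation

lemma aux_meas_dg (i : ℕ) : Measurable (dg p i) :=
  aux_meas_val.comp (aux_meas_T.iterate i)

lemma aux_dg_meas (hμ : μ (ball (0 : ℚ_[p]) 1) = 1) (i : ℕ) (k : ℤ) :
    μ.restrict (ball 0 1) (dg p i ⁻¹' {k}) =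
      μ.restrict (ball 0 1) ((fun x : ℚ_[p] => x.valuation) ⁻¹' {k}) :=
  ((aux_mp μ hμ).iterate i).measure_preimage
    (aux_meas_val (measurableSet_singleton _)).nullMeasurableSet

lemma aux_indep_lt (hμ : μ (ball (0 : ℚ_[p]) 1) = 1) {i j : ℕ} (hij : i < j) :
    IndepFun (dg p i) (dg p j) (μ.restrict (ball 0 1)) := by
  have hP := aux_prob μ hμ
  rw [indepFun_iff_map_prod_eq_prod_map_map (aux_meas_dg i).aemeasurable
    (aux_meas_dg j).aemeasurable]
  apply Measure.ext_of_singleton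
  rintro ⟨k, l⟩
  rw [← singleton_prod_singleton, Measure.prod_prod,
    Measure.map_apply ((aux_meas_dg i).prodMk (aux_meas_dg j))
      ((measurableSet_singleton _).prod (measurableSet_singleton _)),
    Measure.map_apply (aux_meas_dg i) (measurableSet_singleton _),
    Measure.map_apply (aux_meas_dg j) (measurableSet_singleton _), aux_dg_meas μ hμ i]
  obtain ⟨n, rfl⟩ := Nat.exists_eq_add_of_lt hij
  have e : (fun x => (dg p i x, dg p (i + n + 1) x)) ⁻¹' ({k} ×ˢ {l}) =
      (schneiderT p)^[i] ⁻¹' ((fun x : ℚ_[p] => x.valuation) ⁻¹' {k} ∩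
        schneiderT p ⁻¹' (dg p n ⁻¹' {l})) := by
    ext x
    simp only [mem_preimage, mem_prod, mem_inter_iff, mem_singleton_iff, dg]
    rw [show i + n + 1 = n + (1 + i) by ring, Function.iterate_add_apply,
      Function.iterate_add_apply _ 1 i]
    rfl
  have hm := aux_meas_dg (p := p) n (measurableSet_singleton l)
  rw [e, ((aux_mp μ hμ).iterate i).measure_preimage
    ((aux_meas_val (measurableSet_singleton _)).inter (aux_meas_T hm)).nullMeasurableSet,
    aux_indep0 μ hμ k hm, aux_dg_meas μ hμ, aux_dg_meas μ hμ]

lemma aux_freq (hμ : μ (ball (0 : ℚ_[p]) 1) = 1) (m : ℕ) :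
    ∀ᵐ x ∂(μ.restrict (ball (0 : ℚ_[p]) 1)), Filter.Tendsto
      (fun n : ℕ => (∑ i ∈ Finset.range n, if dg p i x = (m : ℤ) + 1 then (1 : ℝ) else 0) / (n : ℝ))
      Filter.atTop (nhds (((p : ℝ) - 1) * (p : ℝ) ^ (-((m : ℝ) + 1)))) := by
  have hP := aux_prob μ hμ
  set f : ℤ → ℝ := fun k => if k = (m : ℤ) + 1 then (1 : ℝ) else 0 with hf
  have hfm : Measurable f := measurable_from_top
  have hdg0 : Measurable (dg p 0) := aux_meas_dg 0
  have h0 : (fun x => f (dg p 0 x)) = (dg p 0 ⁻¹' {(m : ℤ) + 1}).indicator (fun _ => (1 : ℝ)) := by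
    ext x
    simp [hf, indicator_apply]
  have hms : MeasurableSet (dg p 0 ⁻¹' {(m : ℤ) + 1}) := hdg0 (measurableSet_singleton _)
  have key := strong_law_ae_real (μ := μ.restrict (ball (0 : ℚ_[p]) 1))
    (fun i x => f (dg p i x)) ?_ ?_ ?_
  · have hint : ∫ x, f (dg p 0 x) ∂(μ.restrict (ball (0 : ℚ_[p]) 1)) =
        ((p : ℝ) - 1) * (p : ℝ) ^ (-((m : ℝ) + 1)) := by
      rw [h0, integral_indicator_const _ hms, Measure.real, aux_dg_meas μ hμ]
      have := aux_k_val μ hμ (m + 1) (by omega) MeasurableSet.univ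
      rw [preimage_univ, inter_univ, Measure.restrict_apply_univ, hμ, mul_one] at this
      rw [show ((m : ℤ) + 1) = ((m + 1 : ℕ) : ℤ) by push_cast; rfl, this, aux_dl μ hμ]
      have hp1 := hp.out.one_le
      have hp0 : (0 : ℝ) ≤ p := by positivity
      simp only [ENNReal.toReal_mul, ENNReal.toReal_pow, smul_eq_mul, mul_one, ENNReal.coe_toReal,
        ENNReal.toReal_natCast, Nat.cast_sub hp1]
      rw [Real.rpow_neg hp0, ← Nat.cast_succ, Real.rpow_natCast]
      simp
    rw [hint] at key
    exact key
  · change Integrable (fun x => f (dg p 0 x)) _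
    rw [h0]
    exact (integrable_const _).indicator hms
  · intro i j hij
    have : IndepFun (dg p i) (dg p j) (μ.restrict (ball 0 1)) := by
      rcases lt_or_gt_of_ne hij with h | h
      · exact aux_indep_lt μ hμ h
      · exact (aux_indep_lt μ hμ h).symm
    exact this.comp hfm hfm
  · intro i
    have : IdentDistrib (dg p i) (dg p 0) (μ.restrict (ball 0 1)) (μ.restrict (ball 0 1)) := by
      refine ⟨(aux_meas_dg i).aemeasurable, hdg0.aemeasurable, ?_⟩
      apply Measure.ext_of_singleton
      intro k
      rw [Measure.map_apply (aux_meas_dg i) (measurableSet_singleton _),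
        Measure.map_apply hdg0 (measurableSet_singleton _), aux_dg_meas μ hμ, aux_dg_meas μ hμ]
    exact this.comp hfm

end aux

lemma det_avg (a : ℕ → ℤ) (g : ℕ → ℝ) (hg0 : ∀ m, 0 ≤ g m) (hg : HasSum g 1)
    (hfr : ∀ m : ℕ, Filter.Tendsto
      (fun n : ℕ => (∑ i ∈ Finset.range n, if a i = (m : ℤ) + 1 then (1 : ℝ) else 0) / (n : ℝ))
      Filter.atTop (nhds (g m))) (f : ℤ → ℝ) (hf : ∀ k, |f k| ≤ 1) :
    Filter.Tendsto (fun n : ℕ => (∑ i ∈ Finset.range n, f (a i)) / (n : ℝ))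
      Filter.atTop (nhds (∑' m : ℕ, f ((m : ℤ) + 1) * g m)) := by
  set fr : ℕ → ℕ → ℝ := fun m n =>
    (∑ i ∈ Finset.range n, if a i = (m : ℤ) + 1 then (1 : ℝ) else 0) / (n : ℝ) with hfrdef
  have hle : ∀ m : ℕ, |f ((m : ℤ) + 1) * g m| ≤ g m := fun m => by
    rw [abs_mul, abs_of_nonneg (hg0 m)]
    exact mul_le_of_le_one_left (hg0 m) (hf _)
  have hsum : Summable (fun m : ℕ => f ((m : ℤ) + 1) * g m) :=
    Summable.of_norm_bounded hg.summable (fun m => hle m)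
  rw [Metric.tendsto_atTop]
  intro ε hε
  have hε4 : 0 < ε / 4 := by linarith
  -- choose M
  obtain ⟨M, hM⟩ := (Metric.tendsto_atTop.1 hg.tendsto_sum_nat (ε / 4) hε4)
  have hM1 := hM M le_rfl
  rw [Real.dist_eq, abs_lt] at hM1
  -- tail of limit
  have htail : |(∑' m : ℕ, f ((m : ℤ) + 1) * g m) -
      ∑ m ∈ Finset.range M, f ((m : ℤ) + 1) * g m| ≤ 1 - ∑ m ∈ Finset.range M, g m := by
    rw [← hsum.sum_add_tsum_nat_add M, add_sub_cancel_left]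
    have h1 := hg.summable.sum_add_tsum_nat_add M
    rw [hg.tsum_eq] at h1
    rw [← h1, add_sub_cancel_left]
    rw [← Real.norm_eq_abs]
    refine tsum_of_norm_bounded ((summable_nat_add_iff M).2 hg.summable).hasSum ?_
    intro m
    exact hle (m + M)
  have ht1 : Filter.Tendsto (fun n => ∑ m ∈ Finset.range M, f ((m : ℤ) + 1) * fr m n)
      Filter.atTop (nhds (∑ m ∈ Finset.range M, f ((m : ℤ) + 1) * g m)) :=
    tendsto_finsetSum _ (fun m _ => (hfr m).const_mul _)
  have ht2 : Filter.Tendsto (fun n => ∑ m ∈ Finset.range M, fr m n)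
      Filter.atTop (nhds (∑ m ∈ Finset.range M, g m)) :=
    tendsto_finsetSum _ (fun m _ => hfr m)
  obtain ⟨N1, hN1⟩ := Metric.tendsto_atTop.1 ht1 (ε / 4) hε4
  obtain ⟨N2, hN2⟩ := Metric.tendsto_atTop.1 ht2 (ε / 4) hε4
  refine ⟨max 1 (max N1 N2), fun n hn => ?_⟩
  have hn1 : 1 ≤ n := le_trans (le_max_left _ _) hn
  have h1 := hN1 n (le_trans (le_trans (le_max_left _ _) (le_max_right _ _)) hn)
  have h2 := hN2 n (le_trans (le_trans (le_max_right _ _) (le_max_right _ _)) hn)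
  have hnpos : (0 : ℝ) < n := by exact_mod_cast hn1
  have hmain : |(∑ i ∈ Finset.range n, f (a i)) / (n : ℝ) -
      ∑ m ∈ Finset.range M, f ((m : ℤ) + 1) * fr m n| ≤ 1 - ∑ m ∈ Finset.range M, fr m n := by
    have e1 : ∀ h : ℤ → ℝ, ∑ m ∈ Finset.range M, h ((m : ℤ) + 1) * fr m n =
        (∑ i ∈ Finset.range n, ∑ m ∈ Finset.range M,
          h (a i) * (if a i = (m : ℤ) + 1 then (1 : ℝ) else 0)) / n := by
      intro h
      rw [Finset.sum_comm, Finset.sum_div]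
      refine Finset.sum_congr rfl fun m _ => ?_
      rw [hfrdef]
      simp only
      rw [← mul_div_assoc, Finset.mul_sum]
      congr 1
      refine Finset.sum_congr rfl fun i _ => ?_
      split_ifs with h' <;> simp [h']
    have e2 := e1 (fun _ => 1)
    simp only [one_mul] at e2
    rw [e1 f, e2, ← sub_div, ← Finset.sum_sub_distrib]
    have e3 : ∀ y : ℝ, 1 - y / n = ((∑ i ∈ Finset.range n, (1 : ℝ)) - y) / n := by
      intro y
      simp only [Finset.sum_const, Finset.card_range, nsmul_eq_mul, mul_one]
      field_simp
    rw [e3, ← Finset.sum_sub_distrib, abs_div, abs_of_pos hnpos]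
    refine div_le_div_of_nonneg_right ?_ hnpos.le
    refine (Finset.abs_sum_le_sum_abs _ _).trans (Finset.sum_le_sum fun i _ => ?_)
    rw [← Finset.mul_sum]
    set s := ∑ m ∈ Finset.range M, (if a i = (m : ℤ) + 1 then (1 : ℝ) else 0) with hs
    have hs1 : s ≤ 1 := by
      by_cases hex : ∃ m : ℕ, a i = (m : ℤ) + 1
      · obtain ⟨m, hm⟩ := hex
        have : s = ∑ m' ∈ Finset.range M, (if m = m' then (1 : ℝ) else 0) := by
          rw [hs]
          refine Finset.sum_congr rfl fun m' _ => ?_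
          congr 1
          rw [hm]
          simp
        rw [this, Finset.sum_ite_eq]
        split_ifs <;> norm_num
      · have : s = 0 := by
          rw [hs]
          refine Finset.sum_eq_zero fun m _ => ?_
          rw [if_neg]
          exact fun h => hex ⟨m, h⟩
        rw [this]; norm_num
    have : f (a i) - f (a i) * s = f (a i) * (1 - s) := by ring
    rw [this, abs_mul, abs_of_nonneg (by linarith : 0 ≤ 1 - s)]
    exact mul_le_of_le_one_left (by linarith) (hf _)
  rw [Real.dist_eq] at h1 h2 ⊢
  rw [abs_lt] at h1 h2 ⊢
  rw [abs_le] at hmain htail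
  constructor <;> linarith [h1.1, h1.2, h2.1, h2.2, hmain.1, hmain.2, htail.1, htail.2]

lemma rpow_int_le (t : ℝ) (ht : 0 < t) (k : ℤ) : |(k : ℝ) ^ (-t)| ≤ 1 := by
  by_cases h0 : k = 0
  · subst h0
    rw [Int.cast_zero, Real.zero_rpow (by linarith)]
    simp
  · refine (Real.abs_rpow_le_abs_rpow _ _).trans ?_
    apply Real.rpow_le_one_of_one_le_of_nonpos _ (by linarith)
    exact_mod_cast Int.one_le_abs h0

lemma g_hasSum (p : ℕ) [hp : Fact p.Prime] :
    HasSum (fun m : ℕ => ((p : ℝ) - 1) * (p : ℝ) ^ (-((m : ℝ) + 1))) 1 := by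
  have hp1 : (1 : ℝ) < p := by exact_mod_cast hp.out.one_lt
  have h := (hasSum_geometric_of_lt_one (r := (p : ℝ)⁻¹) (by positivity)
    (inv_lt_one_of_one_lt₀ hp1)).mul_left (((p : ℝ) - 1) * (p : ℝ)⁻¹)
  have e1 : ((p : ℝ) - 1) * (p : ℝ)⁻¹ * (1 - (p : ℝ)⁻¹)⁻¹ = 1 := by
    have : (p : ℝ) - 1 ≠ 0 := by linarith
    have : (p : ℝ) ≠ 0 := by linarith
    field_simp
  rw [e1] at h
  have e : (fun m : ℕ => ((p : ℝ) - 1) * (p : ℝ) ^ (-((m : ℝ) + 1))) =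
      fun m : ℕ => ((p : ℝ) - 1) * (p : ℝ)⁻¹ * (p : ℝ)⁻¹ ^ m := by
    funext m
    rw [Real.rpow_neg (by positivity), ← Nat.cast_succ, Real.rpow_natCast, pow_succ, inv_pow,
      mul_inv]
    ring
  rw [e]
  exact h

/-- For `μ_p`-a.e. `x ∈ pℤ_p` and every `t > 0`, the Birkhoff averages
`(a_1(x)^{-t} + ⋯ + a_n(x)^{-t})/n` converge to `(p-1) ∑_{k ≥ 1} k^{-t} p^{-k}`,
which is a finite (convergent) sum.  Here `a_{i+1}(x) = v_p(T_p^i x)`. -/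
theorem stmt_14 (p : ℕ) [hp : Fact p.Prime]
    [MeasurableSpace ℚ_[p]] [BorelSpace ℚ_[p]]
    (μ : MeasureTheory.Measure ℚ_[p]) [μ.IsAddHaarMeasure]
    (hμ : μ {x : ℚ_[p] | ‖x‖ < 1} = 1) :
    (∀ t : ℝ, 0 < t →
      Summable (fun k : ℕ => ((k : ℝ) + 1) ^ (-t) * (p : ℝ) ^ (-((k : ℝ) + 1)))) ∧
    ∀ᵐ x ∂μ, ‖x‖ < 1 → ∀ t : ℝ, 0 < t →
      Filter.Tendsto
        (fun n : ℕ =>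
          (∑ i ∈ Finset.range n, ((((schneiderT p)^[i] x).valuation : ℝ)) ^ (-t)) / (n : ℝ))
        Filter.atTop
        (nhds (((p : ℝ) - 1) * ∑' k : ℕ, ((k : ℝ) + 1) ^ (-t) * (p : ℝ) ^ (-((k : ℝ) + 1)))) := by
  have hp1 : (1 : ℝ) < p := by exact_mod_cast hp.out.one_lt
  have hgs := g_hasSum p
  constructor
  · intro t ht
    have hs : Summable (fun m : ℕ => (p : ℝ) ^ (-((m : ℝ) + 1))) :=
      (summable_mul_left_iff (by linarith : (p : ℝ) - 1 ≠ 0)).1 hgs.summable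
    refine Summable.of_norm_bounded hs fun k => ?_
    have h := rpow_int_le t ht ((k : ℤ) + 1)
    push_cast at h
    have hpos : 0 ≤ (p : ℝ) ^ (-((k : ℝ) + 1)) := by positivity
    rw [norm_mul, Real.norm_eq_abs, Real.norm_eq_abs, abs_of_nonneg hpos]
    exact mul_le_of_le_one_left hpos h
  · have hB : {x : ℚ_[p] | ‖x‖ < 1} = Metric.ball 0 1 := by
      ext x; simp
    rw [hB] at hμ
    have hall := MeasureTheory.ae_all_iff.2 (fun m => aux_freq μ hμ m)
    rw [MeasureTheory.ae_restrict_iff' Metric.isOpen_ball.measurableSet] at hall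
    filter_upwards [hall] with x hx hx1 t ht
    have hfr := hx (by simpa using hx1)
    have h := det_avg (fun i => dg p i x) _ (fun m => ?_) hgs hfr (fun k => (k : ℝ) ^ (-t))
      (rpow_int_le t ht)
    · rw [← tsum_mul_left]
      have e : (∑' k : ℕ, ((p : ℝ) - 1) * (((k : ℝ) + 1) ^ (-t) * (p : ℝ) ^ (-((k : ℝ) + 1)))) =
          ∑' m : ℕ, (((m : ℤ) + 1 : ℤ) : ℝ) ^ (-t) *
            (((p : ℝ) - 1) * (p : ℝ) ^ (-((m : ℝ) + 1))) := by
        refine tsum_congr fun m => ?_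
        push_cast
        ring
      rw [e]
      exact h
    · have : (0 : ℝ) ≤ (p : ℝ) - 1 := by linarith
      positivity
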